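/- For m ≥ 4, the number of weight-6 codewords of BiD^⊥(m,2,2) that contain the constant monomial X^0 in their support is m·2^{m−1}, and the total number of weight-6 codewords is m·2^{m−2}·3^{m−1}. -/

import Mathlib

/-!
Let `S` be the support of a codeword of weight 6. Since `1 + α + α² = 0` is the only relation
over `F_2` between `1, α, α²` and `S` has even size, the transform vanishes at the frequencies of weight 2 iff `x a + x b`
and `x a - x b` take each value an even number of times on `S`, for all coordinates `a ≠ b`.
Counting along the four lines through a point `(s, t)` of the plane turns this into the parity law
`Lawful`: the number of `x ∈ S` with `(x a, x b) = (s, t)` has the parity of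
`#{x a = s} + #{x b = t}` (`lawful_of_code`).

Call a coordinate even if each of its values is taken an even number of times. The coordinates
are neither all even (`not_all_even`) nor, for `m ≥ 4`, all odd (`not_all_odd`). If both kinds
occur, the parity law leaves exactly one odd coordinate `l`, which misses one value `r`, and pairs up
the points of `S` in all other coordinates, each of which is a bijective function of any other
(`classify`). So `S` is `twoLines l r σ`: two parallel lines that differ in the coordinate `l` only,
with directions vanishing only at `l`. Conversely each such set is the support of a codeword
(`word_mem_code`).

Parametrising the lines by the coordinate at some `o l ≠ l` leaves `m - 2` free permutations of
`ZMod 3`. Thus there are `m * (3 * 6 ^ (m - 2))` codewords; those through `0` have `r ≠ 0` and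
permutations fixing `0`, so there are `m * (2 * 2 ^ (m - 2))` of them.
-/

open Finset

abbrev F4 := GaloisField 2 2

noncomputable def toF4 : ZMod 2 →+* F4 := ZMod.castHom dvd_rfl F4

def dotp {m : ℕ} (i j : Fin m → ZMod 3) : ZMod 3 := ∑ l, i l * j l

noncomputable def dft {m : ℕ} (α : F4) (f : (Fin m → ZMod 3) → ZMod 2)
    (j : Fin m → ZMod 3) : F4 :=
  ∑ i : Fin m → ZMod 3, toF4 (f i) * α ^ (dotp i j).val

noncomputable def code (m : ℕ) (α : F4) (W : Set ℕ) :
    Set ((Fin m → ZMod 3) → ZMod 2) :=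
  {f | ∀ j : Fin m → ZMod 3, hammingNorm j ∉ W → dft α f j = 0}

/-! ### The character `z ↦ α ^ z.val` of `ZMod 3` -/

theorem chi_sum (α : F4) (hα : α ^ 2 = α + 1) : ∑ z : ZMod 3, α ^ z.val = 0 := by
  have h : ∑ z : ZMod 3, α ^ z.val = α ^ 0 + α ^ 1 + α ^ 2 := Fin.sum_univ_three _
  rw [h, hα]
  have h2 : (2 : F4) = 0 := CharTwo.two_eq_zero
  linear_combination (α + 1) * h2

/-- `1, α` are independent over `F_2` and `α ^ 2 = 1 + α`, so a relation between
`1, α, α ^ 2` with natural coefficients has coefficients of equal parity. -/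
theorem parity_eq (α : F4) (hα : α ^ 2 = α + 1) (a b c : ℕ)
    (h : (a : F4) + b * α + c * α ^ 2 = 0) : a % 2 = b % 2 ∧ a % 2 = c % 2 := by
  have h2 : (2 : F4) = 0 := CharTwo.two_eq_zero
  have h0 : α ≠ 0 := by
    rintro rfl
    simp at hα
  have h1 : α + 1 ≠ 0 := by
    intro h'
    rw [h'] at hα
    exact h0 (pow_eq_zero_iff (two_ne_zero) |>.1 hα)
  have h3 : α ≠ 1 := by
    rintro rfl
    apply h1
    linear_combination h2
  rw [CharP.cast_eq_mod F4 2 a, CharP.cast_eq_mod F4 2 b, CharP.cast_eq_mod F4 2 c, hα] at h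
  rcases Nat.mod_two_eq_zero_or_one a with ha | ha <;>
  rcases Nat.mod_two_eq_zero_or_one b with hb | hb <;>
  rcases Nat.mod_two_eq_zero_or_one c with hc | hc <;>
  simp only [ha, hb, hc, Nat.cast_zero, Nat.cast_one] at h ⊢ <;> simp <;> exfalso
  · exact h1 (by linear_combination h)
  · exact h0 (by linear_combination h)
  · exact one_ne_zero (α := F4) (by linear_combination h - α * h2)
  · exact one_ne_zero (α := F4) (by linear_combination h)
  · exact h0 (by linear_combination h - h2)
  · exact h1 (by linear_combination h)

/-! ### Point counts of a support -/

section Counting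

variable {m : ℕ}

/-- The number of points of `S` whose `a`-th coordinate is `s`. -/
def cnt (S : Finset (Fin m → ZMod 3)) (a : Fin m) (s : ZMod 3) : ℕ :=
  (S.filter fun x => x a = s).card

/-- The number of points of `S` whose coordinates at `a`, `b` are `s`, `t`. -/
def cnt2 (S : Finset (Fin m → ZMod 3)) (a b : Fin m) (s t : ZMod 3) : ℕ :=
  (S.filter fun x => x a = s ∧ x b = t).card

theorem sum_three (g : ZMod 3 → ℕ) (e : ZMod 3) :
    ∑ s, g s = g e + g (e + 1) + g (e + 2) := by
  have h : ∑ s, g s = g 0 + g 1 + g 2 := Fin.sum_univ_three g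
  rw [h]
  have h12 : (1 : ZMod 3) + 2 = 0 := by decide
  have h21 : (2 : ZMod 3) + 1 = 0 := by decide
  have h22 : (2 : ZMod 3) + 2 = 1 := by decide
  have h11 : (1 : ZMod 3) + 1 = 2 := by decide
  have he : e = 0 ∨ e = 1 ∨ e = 2 := by revert e; decide
  rcases he with rfl | rfl | rfl <;> simp only [zero_add, h12, h21, h22, h11] <;> ring

theorem card_fibers (S : Finset (Fin m → ZMod 3)) (g : (Fin m → ZMod 3) → ZMod 3)
    (e : ZMod 3) :
    S.card = (S.filter fun x => g x = e).card + (S.filter fun x => g x = e + 1).card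
      + (S.filter fun x => g x = e + 2).card := by
  rw [← sum_three (fun s => (S.filter fun x => g x = s).card) e]
  exact card_eq_sum_card_fiberwise (fun _ _ => mem_coe.2 (mem_univ _))

theorem cnt_sum (S : Finset (Fin m → ZMod 3)) (a : Fin m) (e : ZMod 3) :
    S.card = cnt S a e + cnt S a (e + 1) + cnt S a (e + 2) :=
  card_fibers S (fun x => x a) e

theorem cnt_row (S : Finset (Fin m → ZMod 3)) (a b : Fin m) (s e : ZMod 3) :
    cnt S a s = cnt2 S a b s e + cnt2 S a b s (e + 1) + cnt2 S a b s (e + 2) := by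
  have := card_fibers (S.filter fun x => x a = s) (fun x => x b) e
  simpa only [filter_filter, cnt, cnt2] using this

theorem cnt2_comm (S : Finset (Fin m → ZMod 3)) (a b : Fin m) (s t : ZMod 3) :
    cnt2 S a b s t = cnt2 S b a t s := by
  simp only [cnt2, and_comm]

theorem cnt_col (S : Finset (Fin m → ZMod 3)) (a b : Fin m) (t e : ZMod 3) :
    cnt S b t = cnt2 S a b e t + cnt2 S a b (e + 1) t + cnt2 S a b (e + 2) t := by
  simp only [cnt2_comm S a b]
  exact cnt_row S b a t e

theorem dft_eq_sum (α : F4) (f : (Fin m → ZMod 3) → ZMod 2) (j : Fin m → ZMod 3) :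
    dft α f j = ∑ x ∈ univ.filter (fun x => f x ≠ 0), α ^ (dotp x j).val := by
  rw [dft, sum_filter]
  refine sum_congr rfl fun x _ => ?_
  have h : f x = 0 ∨ f x = 1 := by
    generalize f x = y
    revert y
    decide
  rcases h with h | h <;> simp [h]

theorem sum_chi_eq (α : F4) (S : Finset (Fin m → ZMod 3)) (g : (Fin m → ZMod 3) → ZMod 3) :
    ∑ x ∈ S, α ^ (g x).val = ((S.filter fun x => g x = 0).card : F4)
      + ((S.filter fun x => g x = 1).card : F4) * α
      + ((S.filter fun x => g x = 2).card : F4) * α ^ 2 := by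
  have h : ∑ x ∈ S, α ^ (g x).val
      = ∑ z : ZMod 3, ((S.filter fun x => g x = z).card : F4) * α ^ z.val := by
    rw [← sum_fiberwise S g]
    refine sum_congr rfl fun z _ => ?_
    rw [← nsmul_eq_mul, ← sum_const]
    refine sum_congr rfl fun x hx => ?_
    rw [(mem_filter.1 hx).2]
  rw [h]
  have h3 := Fin.sum_univ_three
    (fun z : ZMod 3 => ((S.filter fun x => g x = z).card : F4) * α ^ z.val)
  refine h3.trans ?_
  congr 1
  · congr 1
    · exact (congrArg _ (pow_zero α)).trans (mul_one _)
    · exact congrArg _ (pow_one α)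

theorem even_of_sum_zero (α : F4) (hα : α ^ 2 = α + 1) (S : Finset (Fin m → ZMod 3))
    (hS : S.card = 6) (g : (Fin m → ZMod 3) → ZMod 3)
    (h : ∑ x ∈ S, α ^ (g x).val = 0) (c : ZMod 3) :
    Even (S.filter fun x => g x = c).card := by
  rw [sum_chi_eq] at h
  obtain ⟨h1, h2⟩ := parity_eq α hα _ _ _ h
  have h3 := card_fibers S g 0
  simp only [zero_add] at h3
  rw [Nat.even_iff]
  have hc : c = 0 ∨ c = 1 ∨ c = 2 := by revert c; decide
  rcases hc with rfl | rfl | rfl <;> omega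

theorem dotp_pair (x : Fin m → ZMod 3) (a b : Fin m) (ε : ZMod 3) :
    dotp x (Pi.single a 1 + Pi.single b ε) = x a + x b * ε := by
  simp [dotp, mul_add, sum_add_distrib, Pi.single_apply]

theorem norm_pair {a b : Fin m} (hab : a ≠ b) {ε : ZMod 3} (hε : ε ≠ 0) :
    hammingNorm (Pi.single a 1 + Pi.single b ε : Fin m → ZMod 3) = 2 := by
  have h : (univ.filter fun k => (Pi.single a 1 + Pi.single b ε : Fin m → ZMod 3) k ≠ 0)
      = {a, b} := by
    ext k
    by_cases ha : k = a
    · subst ha; simp [hab]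
    · by_cases hb : k = b
      · subst hb; simp [ha, hε]
      · simp [ha, hb]
  rw [hammingNorm, h, card_pair hab]

/-- The parity law satisfied by the point counts of the support of a codeword of weight 6. -/
def Lawful (S : Finset (Fin m → ZMod 3)) : Prop :=
  ∀ a b, a ≠ b → ∀ s t, (cnt2 S a b s t + cnt S a s + cnt S b t) % 2 = 0

/-- In the plane of two coordinates, the four lines through `(s, t)` cover every point once,
except for `(s, t)`, which they cover four times. Both diagonal lines carry an even number of
points of the support, because the transform vanishes at the two weight-2 frequencies. -/
theorem lawful_of_code (α : F4) (hα : α ^ 2 = α + 1) (f : (Fin m → ZMod 3) → ZMod 2)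
    (hf : f ∈ code m α {n | n ≤ m ∧ n ≠ 2}) (h6 : hammingNorm f = 6) :
    Lawful (univ.filter fun x => f x ≠ 0) := by
  intro a b hab s t
  set S := univ.filter fun x => f x ≠ 0 with hSdef
  have hS : S.card = 6 := h6
  have key : ∀ ε : ZMod 3, ε ≠ 0 → ∀ c,
      Even (S.filter fun x => x a + x b * ε = c).card := by
    intro ε hε c
    apply even_of_sum_zero α hα S hS
    have := hf (Pi.single a 1 + Pi.single b ε) (by
      rw [norm_pair hab hε]
      simp)
    rw [dft_eq_sum] at this
    simpa only [dotp_pair] using this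
  have k1 := Nat.even_iff.1 (key 1 (by decide) (s + t * 1))
  have k2 := Nat.even_iff.1 (key 2 (by decide) (s + t * 2))
  have hpt : ∀ s t u v : ZMod 3,
      (if u = s then 1 else 0) + (if v = t then 1 else 0)
        + (if u + v * 1 = s + t * 1 then 1 else 0) + (if u + v * 2 = s + t * 2 then 1 else 0)
      = 1 + 3 * (if u = s ∧ v = t then 1 else 0) := by decide
  have hsum := sum_congr (rfl : S = S) fun x _ => hpt s t (x a) (x b)
  simp only [sum_add_distrib, ← mul_sum, ← card_filter, sum_const, smul_eq_mul, mul_one] at hsum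
  simp only [cnt, cnt2]
  simp only [mul_one] at k1
  omega

end Counting

/-! ### Codewords made of two parallel lines -/

section Family

variable {m : ℕ}

/-- The point with `l`-th coordinate `t` and `k`-th coordinate `σ k c` for `k ≠ l`. -/
def pt (l : Fin m) (σ : Fin m → Equiv.Perm (ZMod 3)) (t c : ZMod 3) : Fin m → ZMod 3 :=
  fun k => if k = l then t else σ k c

/-- The union of the two lines `{pt l σ t c | c}` with `t ≠ r`. They are affine lines since every
permutation of `ZMod 3` is affine; they are parallel, with a direction vanishing only at `l`. -/
def twoLines (l : Fin m) (r : ZMod 3) (σ : Fin m → Equiv.Perm (ZMod 3)) :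
    Finset (Fin m → ZMod 3) :=
  ((univ.erase r) ×ˢ (univ : Finset (ZMod 3))).image fun q => pt l σ q.1 q.2

/-- The word with support `twoLines l r σ`, for `p = ⟨l, r, σ⟩`. -/
def word (p : Σ _ : Fin m, ZMod 3 × (Fin m → Equiv.Perm (ZMod 3))) :
    (Fin m → ZMod 3) → ZMod 2 :=
  fun x => if x ∈ twoLines p.1 p.2.1 p.2.2 then 1 else 0

/-- Parameters `⟨l, r, σ⟩` with `r ∈ A` and `σ k ∈ B`, normalised by `σ l = 1` (this value does
not matter) and `σ (o l) = 1` (the lines are parametrised by their coordinate at `o l ≠ l`). -/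
def params (o : Fin m → Fin m) (A : Finset (ZMod 3)) (B : Finset (Equiv.Perm (ZMod 3))) :
    Finset (Σ _ : Fin m, ZMod 3 × (Fin m → Equiv.Perm (ZMod 3))) :=
  univ.sigma fun l => A ×ˢ Fintype.piFinset fun k => if k = l ∨ k = o l then {1} else B

theorem mem_twoLines {l : Fin m} {r : ZMod 3} {σ : Fin m → Equiv.Perm (ZMod 3)}
    {x : Fin m → ZMod 3} :
    x ∈ twoLines l r σ ↔ ∃ t c, t ≠ r ∧ pt l σ t c = x := by
  simp [twoLines]

theorem mem_params {o : Fin m → Fin m} {A : Finset (ZMod 3)} {B : Finset (Equiv.Perm (ZMod 3))}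
    {l : Fin m} {r : ZMod 3} {σ : Fin m → Equiv.Perm (ZMod 3)} :
    ⟨l, r, σ⟩ ∈ params o A B ↔ r ∈ A ∧ σ l = 1 ∧ σ (o l) = 1 ∧
      ∀ k, k ≠ l → k ≠ o l → σ k ∈ B := by
  simp only [params, mem_sigma, mem_univ, true_and, mem_product, Fintype.mem_piFinset]
  refine and_congr_right fun _ => ⟨fun h => ⟨by simpa using h l, by simpa using h (o l), ?_⟩, ?_⟩
  · intro k h1 h2
    simpa [h1, h2] using h k
  · rintro ⟨h1, h2, h3⟩ k
    by_cases hk : k = l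
    · subst hk; simpa using h1
    · by_cases hk' : k = o l
      · subst hk'; simpa using h2
      · simpa [hk, hk'] using h3 k hk hk'

theorem card_params (o : Fin m → Fin m) (ho : ∀ l, o l ≠ l) (A : Finset (ZMod 3))
    (B : Finset (Equiv.Perm (ZMod 3))) :
    (params o A B).card = m * (A.card * B.card ^ (m - 2)) := by
  rw [params, card_sigma]
  rw [sum_congr rfl (g := fun _ => A.card * B.card ^ (m - 2))]
  · simp
  intro l _
  rw [card_product, Fintype.card_piFinset]
  congr 1
  have h1 : ∀ k, (if k = l ∨ k = o l then ({1} : Finset (Equiv.Perm (ZMod 3))) else B).card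
      = if k = l ∨ k = o l then 1 else B.card := by
    intro k
    split_ifs <;> simp
  simp only [h1]
  rw [prod_ite]
  simp only [prod_const_one, one_mul, prod_const]
  congr 1
  have h2 : (univ.filter fun k => ¬ (k = l ∨ k = o l)) = univ \ {l, o l} := by
    ext k
    simp
  rw [h2, card_sdiff_of_subset (subset_univ _), card_pair (ho l).symm]
  simp

theorem pt_inj {l a : Fin m} (ha : a ≠ l) {σ : Fin m → Equiv.Perm (ZMod 3)} {t c t' c' : ZMod 3}
    (h : pt l σ t c = pt l σ t' c') : t = t' ∧ c = c' := by
  constructor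
  · simpa [pt] using congrFun h l
  · simpa [pt, ha] using congrFun h a

theorem support_word (p : Σ _ : Fin m, ZMod 3 × (Fin m → Equiv.Perm (ZMod 3))) :
    (univ.filter fun x => word p x ≠ 0) = twoLines p.1 p.2.1 p.2.2 := by
  ext x
  simp [word]

theorem norm_word (o : Fin m → Fin m) (ho : ∀ l, o l ≠ l)
    (p : Σ _ : Fin m, ZMod 3 × (Fin m → Equiv.Perm (ZMod 3))) : hammingNorm (word p) = 6 := by
  rw [hammingNorm, support_word, twoLines, card_image_of_injective]
  · rw [card_product, card_erase_of_mem (mem_univ _)]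
    simp
  · rintro ⟨t, c⟩ ⟨t', c'⟩ h
    obtain ⟨h1, h2⟩ := pt_inj (ho p.1) h
    exact Prod.ext h1 h2

/-- At a frequency vanishing at `l` the two lines contribute equally and cancel; at a weight-2
frequency not vanishing at `l` each of the lines already sums to zero. -/
theorem word_mem_code (α : F4) (hα : α ^ 2 = α + 1) (o : Fin m → Fin m) (ho : ∀ l, o l ≠ l)
    (p : Σ _ : Fin m, ZMod 3 × (Fin m → Equiv.Perm (ZMod 3))) :
    word p ∈ code m α {n | n ≤ m ∧ n ≠ 2} := by
  intro j hj
  have hj2 : hammingNorm j = 2 := by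
    by_contra h
    apply hj
    refine ⟨?_, h⟩
    have := hammingNorm_le_card_fintype (x := j)
    simpa using this
  obtain ⟨l, r, σ⟩ := p
  rw [dft_eq_sum, support_word, twoLines, sum_image, sum_product]
  swap
  · rintro ⟨t, c⟩ _ ⟨t', c'⟩ _ h
    obtain ⟨h1, h2⟩ := pt_inj (ho l) h
    exact Prod.ext h1 h2
  by_cases hl : j l = 0
  · have hdot : ∀ t c, dotp (pt l σ t c) j = dotp (pt l σ 0 c) j := by
      intro t c
      refine sum_congr rfl fun k _ => ?_
      by_cases hk : k = l
      · subst hk; simp [hl]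
      · simp [pt, hk]
    simp only [hdot _]
    rw [sum_const, card_erase_of_mem (mem_univ _)]
    simp [ZMod.card, CharTwo.two_eq_zero]
  · apply sum_eq_zero
    intro t _
    obtain ⟨u, v, huv, hsupp⟩ := card_eq_two.1 hj2
    have hb : ∃ b, b ≠ l ∧ j b ≠ 0 ∧ ∀ k, k ≠ l → k ≠ b → j k = 0 := by
      have hmem : ∀ k, j k ≠ 0 ↔ k = u ∨ k = v := by
        intro k
        have := congrArg (k ∈ ·) hsupp
        simpa using this
      rcases (hmem l).1 hl with rfl | rfl
      · refine ⟨v, huv.symm, (hmem v).2 (Or.inr rfl), fun k h1 h2 => ?_⟩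
        by_contra h
        rcases (hmem k).1 h with h | h
        · exact h1 h
        · exact h2 h
      · refine ⟨u, huv, (hmem u).2 (Or.inl rfl), fun k h1 h2 => ?_⟩
        by_contra h
        rcases (hmem k).1 h with h | h
        · exact h2 h
        · exact h1 h
    obtain ⟨b, hbl, hb0, hrest⟩ := hb
    have hdot : ∀ c, dotp (pt l σ t c) j = t * j l + σ b c * j b := by
      intro c
      rw [dotp, sum_eq_add_of_mem l b (mem_univ _) (mem_univ _) hbl.symm]
      · simp [pt, hbl]
      · rintro k _ ⟨h1, h2⟩
        rw [hrest k h1 h2, mul_zero]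
    simp only [hdot]
    have h3 : Function.Bijective fun c : ZMod 3 => t * j l + σ b c * j b := by
      rw [← Finite.injective_iff_bijective]
      intro c c' h
      apply (σ b).injective
      have : σ b c * j b = σ b c' * j b := add_left_cancel h
      exact mul_right_cancel₀ hb0 this
    rw [Function.Bijective.sum_comp h3 (fun z : ZMod 3 => α ^ z.val)]
    exact chi_sum α hα

theorem word_injOn (o : Fin m → Fin m) (ho : ∀ l, o l ≠ l) :
    Set.InjOn (word (m := m)) (params o univ univ : Set _) := by
  rintro ⟨l, r, σ⟩ hp ⟨l', r', τ⟩ hp' h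
  have hT : twoLines l r σ = twoLines l' r' τ := by
    rw [← support_word ⟨l, r, σ⟩, h, support_word]
  obtain ⟨-, hσl, hσo, -⟩ := mem_params.1 (mem_coe.1 hp)
  obtain ⟨-, hτl, hτo, -⟩ := mem_params.1 (mem_coe.1 hp')
  have hsub : ∀ t c, t ≠ r → ∃ t' c', t' ≠ r' ∧ pt l' τ t' c' = pt l σ t c := by
    intro t c ht
    exact mem_twoLines.1 (hT ▸ mem_twoLines.2 ⟨t, c, ht, rfl⟩)
  -- Among all coordinates, only the `l'`-th one misses a value.
  have hll : l = l' := by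
    by_contra hne
    obtain ⟨t, ht⟩ := exists_ne r
    obtain ⟨t', c', ht', he⟩ := hsub t ((σ l').symm r') ht
    have := congrFun he l'
    simp [pt, Ne.symm hne] at this
    exact ht' this
  subst hll
  have hr : r = r' := by
    by_contra hne
    obtain ⟨t', c', ht', he⟩ := hsub r' 0 (Ne.symm hne)
    have := congrFun he l
    simp [pt] at this
    exact ht' this
  subst hr
  have hστ : σ = τ := by
    funext k
    by_cases hk : k = l
    · subst hk; rw [hσl, hτl]
    · ext c
      obtain ⟨t, ht⟩ := exists_ne r
      obtain ⟨t', c', ht', he⟩ := hsub t c ht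
      have h1 := congrFun he (o l)
      simp [pt, ho l, hσo, hτo] at h1
      have h2 := congrFun he k
      simp [pt, hk, h1] at h2
      rw [h2]
  rw [hστ]

end Family

/-! ### Classification of the supports -/

section Classification

variable {m : ℕ}

theorem cnt_parity {S : Finset (Fin m → ZMod 3)} (hS : S.card = 6) (a : Fin m) :
    (∀ s, cnt S a s % 2 = 0) ∨
      ∃ e, cnt S a e % 2 = 0 ∧ cnt S a (e + 1) % 2 = 1 ∧ cnt S a (e + 2) % 2 = 1 := by
  have h := cnt_sum S a 0
  have h3 : (1 : ZMod 3) + 1 = 2 ∧ (1 : ZMod 3) + 2 = 0 ∧ (2 : ZMod 3) + 1 = 0 ∧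
    (2 : ZMod 3) + 2 = 1 := by decide
  obtain ⟨h11, h12, h21, h22⟩ := h3
  simp only [zero_add] at h
  by_cases h0 : cnt S a 0 % 2 = 0
  · by_cases h1 : cnt S a 1 % 2 = 0
    · left
      intro s
      have hs : s = 0 ∨ s = 1 ∨ s = 2 := by revert s; decide
      rcases hs with rfl | rfl | rfl <;> omega
    · right
      refine ⟨0, h0, ?_, ?_⟩ <;> simp only [zero_add] <;> omega
  · right
    by_cases h1 : cnt S a 1 % 2 = 0
    · refine ⟨1, h1, ?_, ?_⟩ <;> simp only [h11, h12] <;> omega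
    · refine ⟨2, by omega, ?_, ?_⟩ <;> simp only [h21, h22] <;> omega

/-- If all coordinate counts were even, then all pair counts would be even as well, and the two
points of a fibre of size 2 would agree in every coordinate. -/
theorem not_all_even {S : Finset (Fin m → ZMod 3)} (hS : S.card = 6) (hL : Lawful S) :
    ¬ ∀ a s, cnt S a s % 2 = 0 := by
  intro hE
  obtain ⟨x, hx, y, hy, hxy⟩ := one_lt_card.1 (by omega : 1 < S.card)
  obtain ⟨a, ha⟩ := Function.ne_iff.1 hxy
  have hpos : ∀ z ∈ S, 1 ≤ cnt S a (z a) := fun z hz =>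
    card_pos.2 ⟨z, mem_filter.2 ⟨hz, rfl⟩⟩
  have h2 : ∃ s, cnt S a s = 2 := by
    have h1 := hpos x hx
    have h1' := hpos y hy
    have e1 := hE a (x a)
    have e2 := hE a (y a)
    have hsum := cnt_sum S a (x a)
    have hya : y a = x a + 1 ∨ y a = x a + 2 := by
      revert ha
      generalize x a = u
      generalize y a = v
      revert u v
      decide
    rcases hya with h | h
    all_goals
      rw [h] at h1' e2
      by_contra hn
      have n1 : cnt S a (x a) ≠ 2 := fun hh => hn ⟨x a, hh⟩
      have n2 : cnt S a (x a + 1) ≠ 2 := fun hh => hn ⟨x a + 1, hh⟩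
      have n3 : cnt S a (x a + 2) ≠ 2 := fun hh => hn ⟨x a + 2, hh⟩
      have := hE a (x a + 1)
      have := hE a (x a + 2)
      omega
  obtain ⟨s, hs⟩ := h2
  obtain ⟨p, q, hpq, hset⟩ := card_eq_two.1 hs
  apply hpq
  have hp : p ∈ S.filter fun x => x a = s := by rw [hset]; simp
  have hq : q ∈ S.filter fun x => x a = s := by rw [hset]; simp
  funext b
  by_cases hab : a = b
  · subst hab
    rw [(mem_filter.1 hp).2, (mem_filter.1 hq).2]
  · have hl := hL a b hab s (p b)
    have e1 := hE a s
    have e2 := hE b (p b)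
    have hone : 0 < cnt2 S a b s (p b) :=
      card_pos.2 ⟨p, mem_filter.2 ⟨(mem_filter.1 hp).1, (mem_filter.1 hp).2, rfl⟩⟩
    have htwo : 1 < cnt2 S a b s (p b) := by omega
    obtain ⟨u, hu, v, hv, huv⟩ := one_lt_card.1 htwo
    have hmem : ∀ w ∈ S.filter (fun x => x a = s ∧ x b = p b), w = p ∨ w = q := by
      intro w hw
      obtain ⟨w1, w2, _⟩ := mem_filter.1 hw
      have : w ∈ S.filter fun x => x a = s := mem_filter.2 ⟨w1, w2⟩
      rw [hset] at this
      simpa using this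
    have hqb : q ∈ S.filter (fun x => x a = s ∧ x b = p b) := by
      rcases hmem u hu with rfl | rfl
      · rcases hmem v hv with rfl | rfl
        · exact absurd rfl huv
        · exact hv
      · exact hu
    exact (mem_filter.1 hqb).2.2.symm

/-- If no coordinate had all counts even, let `e a` be the only value with even count at `a`. The
sets `{x ∈ S | x a = e a}` have size 2 or 4 and even pairwise intersections, each smaller than
both sets by at least 2. A 6-element set has no four such subsets, by double counting the points
of `S` against the sets and the pairs of sets that contain them. -/
theorem not_all_odd (hm : 4 ≤ m) {S : Finset (Fin m → ZMod 3)} (hS : S.card = 6)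
    (hL : Lawful S) (e : Fin m → ZMod 3)
    (he : ∀ a, cnt S a (e a) % 2 = 0 ∧ cnt S a (e a + 1) % 2 = 1 ∧ cnt S a (e a + 2) % 2 = 1) :
    False := by
  have hn : ∀ a b, a ≠ b → cnt2 S a b (e a) (e b) + 2 ≤ cnt S a (e a) ∧
      cnt2 S a b (e a) (e b) + 2 ≤ cnt S b (e b) ∧ cnt2 S a b (e a) (e b) % 2 = 0 ∧
      cnt S a (e a) ≤ 4 ∧ cnt S a (e a) % 2 = 0 := by
    intro a b hab
    obtain ⟨a0, a1, a2⟩ := he a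
    obtain ⟨b0, b1, b2⟩ := he b
    have r := cnt_row S a b (e a) (e b)
    have c := cnt_col S a b (e b) (e a)
    have l0 := hL a b hab (e a) (e b)
    have l1 := hL a b hab (e a) (e b + 1)
    have l2 := hL a b hab (e a) (e b + 2)
    have l3 := hL a b hab (e a + 1) (e b)
    have l4 := hL a b hab (e a + 2) (e b)
    have t := cnt_sum S a (e a)
    omega
  let i0 : Fin m := ⟨0, by omega⟩
  let i1 : Fin m := ⟨1, by omega⟩
  let i2 : Fin m := ⟨2, by omega⟩
  let i3 : Fin m := ⟨3, by omega⟩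
  have h01 := hn i0 i1 (by simp [i0, i1])
  have h02 := hn i0 i2 (by simp [i0, i2])
  have h03 := hn i0 i3 (by simp [i0, i3])
  have h12 := hn i1 i2 (by simp [i1, i2])
  have h13 := hn i1 i3 (by simp [i1, i3])
  have h23 := hn i2 i3 (by simp [i2, i3])
  have h30 := hn i3 i0 (by simp [i3, i0])
  -- A point in `k` of the four sets, hence in `k.choose 2` intersections, satisfies
  -- `k ≤ k.choose 2 + 1` and `2 * k ≤ k.choose 2 + 3`.
  have hpt : ∀ x : Fin m → ZMod 3,
      ((if x i0 = e i0 then 1 else 0) + (if x i1 = e i1 then 1 else 0)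
        + (if x i2 = e i2 then 1 else 0) + (if x i3 = e i3 then 1 else 0)
      ≤ (if x i0 = e i0 ∧ x i1 = e i1 then 1 else 0) + (if x i0 = e i0 ∧ x i2 = e i2 then 1 else 0)
        + (if x i0 = e i0 ∧ x i3 = e i3 then 1 else 0) + (if x i1 = e i1 ∧ x i2 = e i2 then 1 else 0)
        + (if x i1 = e i1 ∧ x i3 = e i3 then 1 else 0) + (if x i2 = e i2 ∧ x i3 = e i3 then 1 else 0)
        + 1) ∧
      (2 * ((if x i0 = e i0 then 1 else 0) + (if x i1 = e i1 then 1 else 0)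
        + (if x i2 = e i2 then 1 else 0) + (if x i3 = e i3 then 1 else 0))
      ≤ (if x i0 = e i0 ∧ x i1 = e i1 then 1 else 0) + (if x i0 = e i0 ∧ x i2 = e i2 then 1 else 0)
        + (if x i0 = e i0 ∧ x i3 = e i3 then 1 else 0) + (if x i1 = e i1 ∧ x i2 = e i2 then 1 else 0)
        + (if x i1 = e i1 ∧ x i3 = e i3 then 1 else 0) + (if x i2 = e i2 ∧ x i3 = e i3 then 1 else 0)
        + 3) := by
    intro x
    by_cases q0 : x i0 = e i0 <;> by_cases q1 : x i1 = e i1 <;>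
    by_cases q2 : x i2 = e i2 <;> by_cases q3 : x i3 = e i3 <;> simp [q0, q1, q2, q3]
  have s1 := sum_le_sum fun x (_ : x ∈ S) => (hpt x).1
  have s2 := sum_le_sum fun x (_ : x ∈ S) => (hpt x).2
  simp only [sum_add_distrib, ← mul_sum, ← card_filter, sum_const, smul_eq_mul, hS] at s1 s2
  simp only [cnt, cnt2] at h01 h02 h03 h12 h13 h23 h30
  have d0 : ∀ n, n ≤ 4 → n % 2 = 0 → 2 ≤ n → n = 2 ∨ n = 4 := by omega
  have D0 := d0 _ h01.2.2.2.1 h01.2.2.2.2 (by omega)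
  have D1 := d0 _ h12.2.2.2.1 h12.2.2.2.2 (by omega)
  have D2 := d0 _ h23.2.2.2.1 h23.2.2.2.2 (by omega)
  have D3 := d0 _ h30.2.2.2.1 h30.2.2.2.2 (by omega)
  rcases D0 with D0 | D0 <;> rcases D1 with D1 | D1 <;> rcases D2 with D2 | D2 <;>
  rcases D3 with D3 | D3 <;> simp only [D0, D1, D2, D3] at * <;> omega

/-- A coordinate with even counts next to one without forces the pair counts: all six entries off
the even value `e` of `l` are odd, hence equal to 1 as they sum to 6. -/
theorem mixed_pair {S : Finset (Fin m → ZMod 3)} (hS : S.card = 6) (hL : Lawful S)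
    {a l : Fin m} (hal : a ≠ l) (hE : ∀ s, cnt S a s % 2 = 0) {e : ZMod 3}
    (he : cnt S l e % 2 = 0 ∧ cnt S l (e + 1) % 2 = 1 ∧ cnt S l (e + 2) % 2 = 1) :
    cnt S l e = 0 ∧ ∀ s, cnt S a s = 2 ∧ cnt2 S a l s (e + 1) = 1 ∧ cnt2 S a l s (e + 2) = 1 := by
  have hrow : ∀ s, 1 ≤ cnt2 S a l s (e + 1) ∧ 1 ≤ cnt2 S a l s (e + 2) ∧
      cnt S a s = cnt2 S a l s e + cnt2 S a l s (e + 1) + cnt2 S a l s (e + 2) := by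
    intro s
    have := hE s
    have l1 := hL a l hal s (e + 1)
    have l2 := hL a l hal s (e + 2)
    exact ⟨by omega, by omega, cnt_row S a l s e⟩
  have hc := cnt_col S a l e 0
  have ht := cnt_sum S a 0
  have r0 := hrow 0
  have r1 := hrow (0 + 1)
  have r2 := hrow (0 + 2)
  refine ⟨by omega, fun s => ?_⟩
  have hs : s = 0 ∨ s = 0 + 1 ∨ s = 0 + 2 := by revert s; decide
  rcases hs with rfl | rfl | rfl <;> omega

theorem classify (hm : 4 ≤ m) (o : Fin m → Fin m) (ho : ∀ l, o l ≠ l)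
    {S : Finset (Fin m → ZMod 3)} (hS : S.card = 6) (hL : Lawful S) :
    ∃ l r σ, σ l = 1 ∧ σ (o l) = 1 ∧ S = twoLines l r σ := by
  have hodd : ∃ l, ¬ ∀ s, cnt S l s % 2 = 0 := by
    by_contra h
    push Not at h
    exact not_all_even hS hL h
  have heven : ∃ a, ∀ s, cnt S a s % 2 = 0 := by
    by_contra h
    have h' := fun a => (cnt_parity hS a).resolve_left fun h0 => h ⟨a, h0⟩
    choose e he using h'
    exact not_all_odd hm hS hL e he
  obtain ⟨l, hl⟩ := hodd
  obtain ⟨a₀, ha₀⟩ := heven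
  obtain ⟨r, hr⟩ := (cnt_parity hS l).resolve_left hl
  have hal : a₀ ≠ l := by
    rintro rfl
    exact hl ha₀
  have hr0 := (mixed_pair hS hL hal ha₀ hr).1
  -- Two coordinates with odd counts cannot coexist with `a₀`: at the value `r` missed by the
  -- first one, the parity law requires points of `S`.
  have hothers : ∀ b, b ≠ l → ∀ s, cnt S b s % 2 = 0 := by
    intro b hb
    by_contra hbo
    obtain ⟨e, he⟩ := (cnt_parity hS b).resolve_left hbo
    have h1 := hL l b hb.symm r (e + 1)
    have h2 := cnt_row S l b r (e + 1)
    omega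
  have hmix := fun a (ha : a ≠ l) => (mixed_pair hS hL ha (hothers a ha) hr).2
  -- A fibre of a coordinate `a ≠ l` has two points, and these agree at every coordinate `k ≠ l`.
  have hagree : ∀ a, a ≠ l → ∀ k, k ≠ l → ∀ x ∈ S, ∀ y ∈ S, x a = y a → x k = y k := by
    intro a ha k hk x hx y hy hxy
    by_cases hak : a = k
    · subst hak; exact hxy
    have h1 := hL a k hak (x a) (x k)
    have h2 := hothers a ha (x a)
    have h3 := hothers k hk (x k)
    have h4 : 0 < cnt2 S a k (x a) (x k) := card_pos.2 ⟨x, mem_filter.2 ⟨hx, rfl, rfl⟩⟩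
    have h5 := (hmix a ha (x a)).1
    have hsub : (S.filter fun z => z a = x a ∧ z k = x k) ⊆ S.filter fun z => z a = x a := by
      intro z hz
      obtain ⟨z1, z2, _⟩ := mem_filter.1 hz
      exact mem_filter.2 ⟨z1, z2⟩
    have heq := eq_of_subset_of_card_le hsub (by
      change cnt S a (x a) ≤ cnt2 S a k (x a) (x k)
      omega)
    have hy' : y ∈ S.filter fun z => z a = x a := mem_filter.2 ⟨hy, hxy.symm⟩
    rw [← heq] at hy'
    exact (mem_filter.1 hy').2.2.symm
  have hex : ∀ t c, t ≠ r → ∃ x ∈ S, x (o l) = c ∧ x l = t := by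
    intro t c ht
    have h := hmix (o l) (ho l) c
    have ht' : t = r + 1 ∨ t = r + 2 := by
      revert ht
      generalize r = u
      revert t u
      decide
    have hpos : 0 < cnt2 S (o l) l c t := by
      rcases ht' with rfl | rfl <;> omega
    obtain ⟨x, hx⟩ := card_pos.1 hpos
    obtain ⟨x1, x2, x3⟩ := mem_filter.1 hx
    exact ⟨x, x1, x2, x3⟩
  obtain ⟨t₀, ht₀⟩ := exists_ne r
  choose X hXS hXo hXl using fun c => hex t₀ c ht₀
  have hinj : ∀ k, k ≠ l → Function.Injective fun c => X c k := by
    intro k hk c c' h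
    have := hagree k hk (o l) (ho l) (X c) (hXS c) (X c') (hXS c') h
    rwa [hXo, hXo] at this
  let σ : Fin m → Equiv.Perm (ZMod 3) := fun k =>
    if hk : k ≠ l then Equiv.ofBijective _ (Finite.injective_iff_bijective.1 (hinj k hk)) else 1
  have hσ : ∀ k, k ≠ l → ∀ c, σ k c = X c k := by
    intro k hk c
    simp [σ, hk]
  have hpt : ∀ x ∈ S, ∀ c, x (o l) = c → pt l σ (x l) c = x := by
    intro x hx c hc
    funext k
    by_cases hk : k = l
    · subst hk; simp [pt]
    · rw [pt, if_neg hk, hσ k hk]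
      exact hagree (o l) (ho l) k hk _ (hXS c) x hx ((hXo c).trans hc.symm)
  refine ⟨l, r, σ, by simp [σ], ?_, ?_⟩
  · ext c
    rw [hσ _ (ho l), hXo]
    rfl
  · ext x
    rw [mem_twoLines]
    constructor
    · intro hx
      refine ⟨x l, x (o l), ?_, hpt x hx _ rfl⟩
      intro h
      have : 0 < cnt S l r := card_pos.2 ⟨x, mem_filter.2 ⟨hx, h⟩⟩
      omega
    · rintro ⟨t, c, ht, rfl⟩
      obtain ⟨x, hx, hxo, hxl⟩ := hex t c ht
      have := hpt x hx c hxo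
      rw [hxl] at this
      rwa [this]

end Classification

/-! ### The weight-6 codewords and their number -/

theorem codewords_eq {m : ℕ} (hm : 4 ≤ m) (α : F4) (hα : α ^ 2 = α + 1) (o : Fin m → Fin m)
    (ho : ∀ l, o l ≠ l) :
    {f : (Fin m → ZMod 3) → ZMod 2 |
        f ∈ code m α {n | n ≤ m ∧ n ≠ 2} ∧ hammingNorm f = 6}
      = word '' (params o univ univ : Set _) := by
  ext f
  constructor
  · rintro ⟨hf, h6⟩
    obtain ⟨l, r, σ, h1, h2, h3⟩ := classify hm o ho h6 (lawful_of_code α hα f hf h6)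
    refine ⟨⟨l, r, σ⟩, mem_coe.2 (mem_params.2 ⟨mem_univ _, h1, h2, fun _ _ _ => mem_univ _⟩), ?_⟩
    funext x
    have hx : f x ≠ 0 ↔ x ∈ twoLines l r σ := by
      rw [← h3]
      simp
    have hv : f x = 0 ∨ f x = 1 := by
      generalize f x = y
      revert y
      decide
    rcases hv with hv | hv <;> simp [word, ← hx, hv]
  · rintro ⟨p, _, rfl⟩
    exact ⟨word_mem_code α hα o ho p, norm_word o ho p⟩

theorem word_zero_ne {m : ℕ} (o : Fin m → Fin m) (ho : ∀ l, o l ≠ l)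
    {p : Σ _ : Fin m, ZMod 3 × (Fin m → Equiv.Perm (ZMod 3))} (hp : p ∈ params o univ univ) :
    word p 0 ≠ 0 ↔ p ∈ params o (univ.erase 0) (univ.filter fun g => g 0 = 0) := by
  obtain ⟨l, r, σ⟩ := p
  obtain ⟨-, h1, h2, -⟩ := mem_params.1 hp
  have h : word ⟨l, r, σ⟩ 0 ≠ 0 ↔ 0 ∈ twoLines l r σ := by simp [word]
  rw [h, mem_twoLines, mem_params]
  constructor
  · rintro ⟨t, c, ht, he⟩
    have ht0 : t = 0 := by simpa [pt] using congrFun he l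
    have hc0 : c = 0 := by simpa [pt, ho l, h2] using congrFun he (o l)
    subst ht0 hc0
    refine ⟨by simpa using ht.symm, h1, h2, fun k hk _ => ?_⟩
    simpa [pt, hk] using congrFun he k
  · rintro ⟨hr, -, -, hσ⟩
    refine ⟨0, 0, (ne_of_mem_erase hr).symm, ?_⟩
    funext k
    by_cases hk : k = l
    · simp [pt, hk]
    · by_cases hk' : k = o l
      · subst hk'
        simp [pt, hk, h2]
      · have := hσ k hk hk'
        simpa [pt, hk] using this

/-- for `m ≥ 4`, the number of weight-6 codewords of `BiD^⊥(m,2,2)`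
containing the constant monomial `X^0` in their support is `m·2^(m-1)`, and the
total number of weight-6 codewords is `m·2^(m-2)·3^(m-1)`. -/
theorem stmt_18 (m : ℕ) (hm : 4 ≤ m) (α : F4) (hα : α ^ 2 = α + 1) :
    {f : (Fin m → ZMod 3) → ZMod 2 |
        f ∈ code m α {n | n ≤ m ∧ n ≠ 2} ∧ hammingNorm f = 6 ∧ f 0 ≠ 0}.ncard
      = m * 2 ^ (m - 1) ∧
    {f : (Fin m → ZMod 3) → ZMod 2 |
        f ∈ code m α {n | n ≤ m ∧ n ≠ 2} ∧ hammingNorm f = 6}.ncard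
      = m * 2 ^ (m - 2) * 3 ^ (m - 1) := by
  have hnt : Nontrivial (Fin m) := Fin.nontrivial_iff_two_le.2 (by omega)
  choose o ho using fun l : Fin m => exists_ne l
  have hall := codewords_eq hm α hα o ho
  obtain ⟨k, rfl⟩ : ∃ k, m = k + 2 := ⟨m - 2, by omega⟩
  constructor
  · have hzero : {f : (Fin (k + 2) → ZMod 3) → ZMod 2 |
        f ∈ code (k + 2) α {n | n ≤ k + 2 ∧ n ≠ 2} ∧ hammingNorm f = 6 ∧ f 0 ≠ 0}
        = word '' (params o (univ.erase 0) (univ.filter fun g => g 0 = 0) : Set _) := by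
      ext f
      have hf := Set.ext_iff.1 hall f
      constructor
      · rintro ⟨h1, h2, h3⟩
        obtain ⟨p, hp, rfl⟩ := hf.1 ⟨h1, h2⟩
        exact ⟨p, (word_zero_ne o ho hp).1 h3, rfl⟩
      · rintro ⟨p, hp, rfl⟩
        have hp' : p ∈ params o univ univ := by
          obtain ⟨l, r, σ⟩ := p
          obtain ⟨-, h1, h2, -⟩ := mem_params.1 (mem_coe.1 hp)
          exact mem_params.2 ⟨mem_univ _, h1, h2, fun _ _ _ => mem_univ _⟩
        obtain ⟨h1, h2⟩ := hf.2 ⟨p, hp', rfl⟩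
        exact ⟨h1, h2, (word_zero_ne o ho hp').2 hp⟩
    rw [hzero, Set.InjOn.ncard_image, Set.ncard_coe_finset, card_params o ho]
    · have hA : ((univ : Finset (ZMod 3)).erase 0).card = 2 := by decide
      have hB : ((univ : Finset (Equiv.Perm (ZMod 3))).filter fun g => g 0 = 0).card = 2 := by
        decide
      rw [hA, hB, show k + 2 - 2 = k by omega, show k + 2 - 1 = k + 1 by omega]
      ring
    · refine (word_injOn o ho).mono ?_
      rintro ⟨l, r, σ⟩ hp
      obtain ⟨-, h1, h2, -⟩ := mem_params.1 (mem_coe.1 hp)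
      exact mem_coe.2 (mem_params.2 ⟨mem_univ _, h1, h2, fun _ _ _ => mem_univ _⟩)
  · rw [hall, (word_injOn o ho).ncard_image, Set.ncard_coe_finset, card_params o ho]
    have hA : (univ : Finset (ZMod 3)).card = 3 := by decide
    have hB : (univ : Finset (Equiv.Perm (ZMod 3))).card = 6 := by decide
    rw [hA, hB, show k + 2 - 2 = k by omega, show k + 2 - 1 = k + 1 by omega,
      show 6 = 2 * 3 by norm_num, mul_pow]
    ring
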